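/- arXiv:1503.08845 — 2 statements merged into one kernel-verified Lean document; each statement's English description precedes it below -/
import Mathlib

section
/- Let S ∈ ℝ^{3×3} be skew-symmetric, let T ∈ ℝ^{3×3} be arbitrary, and set K = T + Tᵀ − S². Then there exist ε > 0 and C > 0 such that for all real t with |t| < ε, the matrix (Id₃ + tS + t²T)ᵀ(Id₃ + tS + t²T) is symmetric positive definite, and its unique symmetric positive definite square root satisfies ‖((Id₃ + tS + t²T)ᵀ(Id₃ + tS + t²T))^{1/2} − Id₃ − (t²/2) K‖ ≤ C |t|³. -/
noncomputable section

open scoped Topology ENNReal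
open Filter MeasureTheory

/-- Points of the midplate `Ω ⊆ ℝ²`. -/
abbrev E2 : Type := Fin 2 → ℝ
/-- Vectors in `ℝ³`. -/
abbrev V3 : Type := Fin 3 → ℝ
/-- `3×3` real arrays. -/
abbrev M3 : Type := Fin 3 → Fin 3 → ℝ
/-- `2×2` real arrays. -/
abbrev M2 : Type := Fin 2 → Fin 2 → ℝ

/-- Partial derivative `∂ᵢ` of a scalar field on `ℝ²`. -/
def pd2 (i : Fin 2) (f : E2 → ℝ) (x : E2) : ℝ := fderiv ℝ f x (Pi.single i 1)

/-- Partial derivative `∂ᵢ` of an `ℝ³`-valued field on `ℝ²`. -/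
def pdv (i : Fin 2) (f : E2 → V3) (x : E2) : V3 := fderiv ℝ f x (Pi.single i 1)

/-- Euclidean inner product on `ℝ³`. -/
def dot3 (u v : V3) : ℝ := ∑ k, u k * v k

/-- Matrix product of `3×3` arrays. -/
def mmul (A B : M3) : M3 := fun i j => ∑ k, A i k * B k j

/-- Transpose of a `3×3` array. -/
def transp (A : M3) : M3 := fun i j => A j i

/-- The identity `3×3` array. -/
def idm : M3 := fun i j => if i = j then 1 else 0

/-- Frobenius norm of a `3×3` array. -/
def fnorm (A : M3) : ℝ := Real.sqrt (∑ i, ∑ j, (A i j) ^ 2)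

/-- Symmetry of a `3×3` array. -/
def SymM (A : M3) : Prop := ∀ i j, A i j = A j i

/-- Positive definiteness of a `3×3` array. -/
def PosDefM (A : M3) : Prop := ∀ v : V3, v ≠ 0 → 0 < ∑ i, ∑ j, v i * A i j * v j

/-- The special orthogonal group `SO(3)`. -/
def SO3 : Set M3 := {R | mmul (transp R) R = idm ∧ (Matrix.of R).det = 1}

/-- Entries of the inverse of a `3×3` array. -/
def minv (A : M3) : M3 := fun i j => (Matrix.of A)⁻¹ i j

/-- The columns `∂₁y₀, ∂₂y₀, b₀` of the matrix `Q₀`. -/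
def Qcol (y0 b0 : E2 → V3) (x : E2) : Fin 3 → V3 := ![pdv 0 y0 x, pdv 1 y0 x, b0 x]

/-- The determinant of `Q₀`. -/
def Qdet (y0 b0 : E2 → V3) (x : E2) : ℝ := (Matrix.of fun a j => Qcol y0 b0 x j a).det

/-- Partial derivatives `∂₁, ∂₂, ∂₃` of an `x₃`-independent scalar field (so `∂₃ = 0`). -/
def pd3 (k : Fin 3) (f : E2 → ℝ) (x : E2) : ℝ :=
  if h : (k : ℕ) < 2 then pd2 ⟨(k : ℕ), h⟩ f x else 0

/-- Christoffel symbols `Γ^n_{kl}` of the (`x₃`-independent) metric `G`. -/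
def Gamma (G : E2 → M3) (n k l : Fin 3) (x : E2) : ℝ :=
  (1 / 2) * ∑ s, minv (G x) n s *
    (pd3 k (fun y => G y s l) x + pd3 l (fun y => G y s k) x - pd3 s (fun y => G y k l) x)

/-- Covariant Riemann curvatures `R_{iklm}` of the (`x₃`-independent) metric `G`;
indices are `0`-based, so e.g. `R_{1313} = Riem G 0 2 0 2`. -/
def Riem (G : E2 → M3) (i k l m : Fin 3) (x : E2) : ℝ :=
  (1 / 2) * (pd3 k (fun y => pd3 l (fun z => G z i m) y) x
           + pd3 i (fun y => pd3 m (fun z => G z k l) y) x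
           - pd3 k (fun y => pd3 m (fun z => G z i l) y) x
           - pd3 i (fun y => pd3 l (fun z => G z k m) y) x)
    + ∑ n, ∑ p, G x n p *
        (Gamma G n k l x * Gamma G p i m x - Gamma G n k m x * Gamma G p i l x)

/-- The deformation gradient `∇u = [∂₁u | ∂₂u | ∂₃u]` of `u : Ω^h → ℝ³`. -/
def gradu (u : E2 × ℝ → V3) (x : E2 × ℝ) : M3 :=
  fun a j => ![fderiv ℝ u x (Pi.single 0 1, 0),
               fderiv ℝ u x (Pi.single 1 1, 0),
               fderiv ℝ u x (0, 1)] j a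

/-- The elastic energy `E^h(u) = (1/h) ∫_{Ω × (-h/2,h/2)} W(∇u A⁻¹)`. -/
def Eh (W : M3 → ℝ≥0∞) (A : E2 → M3) (Ω : Set E2) (h : ℝ) (u : E2 × ℝ → V3) : ℝ≥0∞ :=
  (ENNReal.ofReal h)⁻¹ *
    ∫⁻ x in Ω ×ˢ Set.Ioo (-(h / 2)) (h / 2), W (mmul (gradu u x) (minv (A x.1)))

/-- Symmetric part of a `3×3` array. -/
def symM (A : M3) : M3 := fun i j => (A i j + A j i) / 2
/-- Symmetric part of a `2×2` array. -/
def sym2M (A : M2) : M2 := fun i j => (A i j + A j i) / 2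
/-- `F₂*`: the `3×3` array with principal `2×2` minor `F₂` and all other entries `0`. -/
def put (F2 : M2) : M3 :=
  fun i j => if h : (i : ℕ) < 2 ∧ (j : ℕ) < 2 then F2 ⟨i, h.1⟩ ⟨j, h.2⟩ else 0
/-- The tensor product `c ⊗ e₃`. -/
def tene3 (c : V3) : M3 := fun i j => if j = 2 then c i else 0
/-- Cross product in `ℝ³`. -/
def cross (u v : V3) : V3 :=
  ![u 1 * v 2 - u 2 * v 1, u 2 * v 0 - u 0 * v 2, u 0 * v 1 - u 1 * v 0]
/-- The quadratic form `Q₃(F) = D²W(Id₃)(F,F)`, for a density `w`. -/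
def Q3d (w : M3 → ℝ) (F : M3) : ℝ := fderiv ℝ (fun P => fderiv ℝ w P F) idm F
/-- The reduced quadratic form `Q_{2,A}(x', F₂)`:
the infimum of `Q₃(A⁻¹ F̃ A⁻¹)` over all `F̃` whose principal `2×2` minor is `F₂`. -/
def QA (w : M3 → ℝ) (A : E2 → M3) (x : E2) (F2 : M2) : ℝ :=
  ⨅ Ft : {Ft : M3 // ∀ i j : Fin 2, Ft i.castSucc j.castSucc = F2 i j},
    Q3d w (mmul (minv (A x)) (mmul Ft.1 (minv (A x))))

/-!
If `B` is positive semidefinite, then `‖Y‖ ≤ ‖(B + 1) * Y‖` in the Frobenius norm, so that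
`B * B - 1 = (B + 1) * (B - 1)` controls `B - 1`. Since `B - 1 - (B * B - 1) / 2` equals
`-(B - 1) ^ 2 / 2`, the square root of `M` is `1 + (M - 1) / 2` up to an error quadratic in `M - 1`.
For `M = (1 + tS + t²T)ᵀ (1 + tS + t²T)` with `S` skew-symmetric the term of order `t` cancels, so
`M - 1 = t²K + O(t³)` and the quadratic error is only `O(t⁴)`.
-/

open Asymptotics
open scoped Matrix Matrix.Norms.Frobenius MatrixOrder ComplexOrder

section Frobenius

variable {m n 𝕜 : Type*} [Fintype m] [Fintype n] [RCLike 𝕜]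

theorem frobenius_norm_sq_eq_re_trace (A : Matrix m n 𝕜) :
    ‖A‖ ^ 2 = RCLike.re (Aᴴ * A).trace := by
  rw [Matrix.frobenius_norm_def, ← Real.sqrt_eq_rpow, Real.sq_sqrt (by positivity),
    Finset.sum_comm]
  simp [Matrix.trace, Matrix.mul_apply, RCLike.conj_mul, RCLike.re_ofReal_pow]

variable [DecidableEq n] {B : Matrix n n 𝕜}

theorem frobenius_norm_le_norm_add_one_mul (hB : B.PosSemidef) (Y : Matrix n m 𝕜) :
    ‖Y‖ ≤ ‖(B + 1) * Y‖ := by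
  have hexpand : ((B + 1) * Y)ᴴ * ((B + 1) * Y) =
      (B * Y)ᴴ * (B * Y) + (2 : ℝ) • (Yᴴ * B * Y) + Yᴴ * Y := by
    simp only [Matrix.add_mul, Matrix.one_mul, Matrix.conjTranspose_add, Matrix.conjTranspose_mul,
      hB.isHermitian.eq, Matrix.mul_add, Matrix.mul_assoc]
    module
  have hcross : 0 ≤ RCLike.re (Yᴴ * B * Y).trace :=
    (RCLike.nonneg_iff.mp (hB.conjTranspose_mul_mul_same Y).trace_nonneg).1
  have hsq : ‖(B + 1) * Y‖ ^ 2 =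
      ‖B * Y‖ ^ 2 + 2 * RCLike.re (Yᴴ * B * Y).trace + ‖Y‖ ^ 2 := by
    simp only [frobenius_norm_sq_eq_re_trace, hexpand, Matrix.trace_add, Matrix.trace_smul,
      map_add, RCLike.smul_re]
  exact le_of_sq_le_sq (by nlinarith [sq_nonneg ‖B * Y‖]) (norm_nonneg _)

theorem frobenius_norm_sub_one_le (hB : B.PosSemidef) : ‖B - 1‖ ≤ ‖B * B - 1‖ := by
  have hfactor : B * B - 1 = (B + 1) * (B - 1) := by noncomm_ring
  rw [hfactor]
  exact frobenius_norm_le_norm_add_one_mul hB (B - 1)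

theorem frobenius_norm_sub_one_sub_half_smul_le (hB : B.PosSemidef) :
    ‖B - 1 - (1 / 2 : ℝ) • (B * B - 1)‖ ≤ 1 / 2 * ‖B * B - 1‖ ^ 2 := by
  have hsquare : B - 1 - (1 / 2 : ℝ) • (B * B - 1) = -((1 / 2 : ℝ) • ((B - 1) * (B - 1))) := by
    simp only [sub_mul, mul_sub, one_mul, mul_one]
    module
  calc ‖B - 1 - (1 / 2 : ℝ) • (B * B - 1)‖ = 1 / 2 * ‖(B - 1) * (B - 1)‖ := by
        rw [hsquare, norm_neg, norm_smul, Real.norm_of_nonneg (by norm_num)]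
    _ ≤ 1 / 2 * ‖B - 1‖ ^ 2 := by
        rw [sq]
        gcongr
        exact norm_mul_le _ _
    _ ≤ 1 / 2 * ‖B * B - 1‖ ^ 2 := by
        gcongr
        exact frobenius_norm_sub_one_le hB

end Frobenius

section SquareRoot

variable {n 𝕜 : Type*} [Fintype n] [RCLike 𝕜]

open scoped Classical in
theorem posDef_sqrt {M : Matrix n n 𝕜} (hM : M.PosDef) : (CFC.sqrt M).PosDef :=
  Matrix.isStrictlyPositive_iff_posDef.mp (.sqrt M hM.isStrictlyPositive)

theorem eq_of_posSemidef_of_mul_self_eq_mul_self {A B : Matrix n n 𝕜} (hA : A.PosSemidef)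
    (hB : B.PosSemidef) (h : A * A = B * B) : A = B := by
  classical exact (CFC.sqrt_unique h hA.nonneg).symm.trans (CFC.sqrt_unique rfl hB.nonneg)

variable [DecidableEq n]

theorem isBigO_sqrt_sub_one_sub_half_smul {α : Type*} {l : Filter α} {M : α → Matrix n n 𝕜}
    (hM : ∀ᶠ a in l, (M a).PosSemidef) :
    (fun a => CFC.sqrt (M a) - 1 - (1 / 2 : ℝ) • (M a - 1)) =O[l] fun a => ‖M a - 1‖ ^ 2 := by
  refine .of_bound (1 / 2) (hM.mono fun a ha => ?_)
  have hbound := frobenius_norm_sub_one_sub_half_smul_le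
    (Matrix.nonneg_iff_posSemidef.mp (CFC.sqrt_nonneg (M a)))
  rw [CFC.sqrt_mul_sqrt_self _ ha.nonneg] at hbound
  simpa only [norm_pow, norm_norm] using hbound

theorem isBigO_sqrt_sub_one_sub_sq_smul {M : ℝ → Matrix n n 𝕜} {K : Matrix n n 𝕜}
    (hM : ∀ᶠ t in 𝓝 0, (M t).PosSemidef)
    (hK : (fun t => M t - 1 - t ^ 2 • K) =O[𝓝 0] fun t => t ^ 3) :
    (fun t => CFC.sqrt (M t) - 1 - (t ^ 2 / 2) • K) =O[𝓝 0] fun t => t ^ 3 := by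
  have hsq : (fun t => M t - 1) =O[𝓝 0] fun t => t ^ 2 := by
    have hmain : (fun t : ℝ => t ^ 2 • K) =O[𝓝 0] fun t => t ^ 2 := by
      simpa using (isBigO_refl (fun t : ℝ => t ^ 2) (𝓝 0)).smul
        (isBigO_const_const K (one_ne_zero (α := ℝ)) (𝓝 0))
    have hcube : (fun t : ℝ => t ^ 3) =O[𝓝 0] fun t => t ^ 2 :=
      (isLittleO_pow_pow (by norm_num)).isBigO
    simpa only [sub_add_cancel] using (hK.trans hcube).add hmain
  have hquad : (fun t => ‖M t - 1‖ ^ 2) =O[𝓝 0] fun t => t ^ 3 := by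
    have hquartic : (fun t : ℝ => (t ^ 2) ^ 2) =O[𝓝 0] fun t => t ^ 3 := by
      simpa only [← pow_mul] using (isLittleO_pow_pow (by norm_num : 3 < 2 * 2)).isBigO
    exact (hsq.norm_left.pow 2).trans hquartic
  have hsum := ((isBigO_sqrt_sub_one_sub_half_smul hM).trans hquad).add
    (hK.const_smul_left (1 / 2 : ℝ))
  refine hsum.congr_left fun t => ?_
  simp only [Pi.smul_apply]
  module

theorem eventually_posDef_conjTranspose_mul_self {X : Type*} [TopologicalSpace X] {x : X}
    {A : X → Matrix n n 𝕜} (hA : ContinuousAt A x) (hx : IsUnit (A x)) :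
    ∀ᶠ y in 𝓝 x, ((A y)ᴴ * A y).PosDef := by
  have hdet : ∀ᶠ y in 𝓝 x, (A y).det ≠ 0 :=
    (continuous_id.matrix_det.continuousAt.comp hA).eventually_ne
      ((Matrix.isUnit_iff_isUnit_det _).mp hx).ne_zero
  filter_upwards [hdet] with y hy
  have hunit : IsUnit (A y) := (Matrix.isUnit_iff_isUnit_det _).mpr hy.isUnit
  exact .conjTranspose_mul_self _ (Matrix.mulVec_injective_of_isUnit hunit)

end SquareRoot

theorem star_mul_self_one_add_smul_add_sq_smul {R A : Type*} [CommRing R] [StarRing R]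
    [TrivialStar R] [Ring A] [StarRing A] [Algebra R A] [StarModule R A] {S T : A}
    (hS : star S = -S) (t : R) :
    star (1 + t • S + t ^ 2 • T) * (1 + t • S + t ^ 2 • T) =
      1 + t ^ 2 • (T + star T - S * S) + t ^ 3 • (star T * S - S * T + t • (star T * T)) := by
  simp only [star_add, star_one, star_smul, star_trivial, hS, add_mul, mul_add, one_mul, mul_one,
    smul_mul_assoc, mul_smul_comm, neg_mul]
  module

theorem isBigO_star_mul_self_sub_one_sub_sq_smul {A : Type*} [NormedRing A] [StarRing A]
    [NormedAlgebra ℝ A] [StarModule ℝ A] {S T : A} (hS : star S = -S) :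
    (fun t : ℝ => star (1 + t • S + t ^ 2 • T) * (1 + t • S + t ^ 2 • T) - 1 -
      t ^ 2 • (T + star T - S * S)) =O[𝓝 0] fun t => t ^ 3 := by
  have hcoeff : (fun t : ℝ => star T * S - S * T + t • (star T * T)) =O[𝓝 0] fun _ => (1 : ℝ) :=
    (Continuous.tendsto (by fun_prop) 0).isBigO_one ℝ
  refine ((isBigO_refl (fun t : ℝ => t ^ 3) (𝓝 0)).smul hcoeff).congr (fun t => ?_) fun t => ?_
  · rw [star_mul_self_one_add_smul_add_sq_smul hS]
    abel
  · simp

theorem stmt2_general {n 𝕜 : Type*} [Fintype n] [DecidableEq n] [RCLike 𝕜] {S : Matrix n n 𝕜}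
    (T : Matrix n n 𝕜) (hS : Sᴴ = -S) :
    ∃ ε > (0 : ℝ), ∃ C > (0 : ℝ), ∀ t : ℝ, |t| < ε →
      ∀ M : Matrix n n 𝕜, M = (1 + t • S + t ^ 2 • T)ᴴ * (1 + t • S + t ^ 2 • T) →
        M.PosDef ∧
        (∃ B : Matrix n n 𝕜, B.PosDef ∧ B * B = M ∧
          ‖B - 1 - (t ^ 2 / 2) • (T + Tᴴ - S * S)‖ ≤ C * |t| ^ 3) ∧
        (∀ B B' : Matrix n n 𝕜, B.PosDef → B * B = M → B'.PosDef → B' * B' = M → B = B') := by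
  have hpos : ∀ᶠ t : ℝ in 𝓝 0,
      ((1 + t • S + t ^ 2 • T)ᴴ * (1 + t • S + t ^ 2 • T)).PosDef :=
    eventually_posDef_conjTranspose_mul_self (Continuous.continuousAt (by fun_prop)) (by simp)
  obtain ⟨C, hC, hbound⟩ := (isBigO_sqrt_sub_one_sub_sq_smul
    (hpos.mono fun _ => Matrix.PosDef.posSemidef)
    (isBigO_star_mul_self_sub_one_sub_sq_smul hS)).exists_pos
  obtain ⟨ε, hε, h⟩ := Metric.eventually_nhds_iff.mp (hpos.and hbound.bound)
  refine ⟨ε, hε, C, hC, ?_⟩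
  rintro t ht M rfl
  obtain ⟨hM, hsqrt⟩ := h (y := t) (by simpa using ht)
  refine ⟨hM, ⟨_, posDef_sqrt hM, CFC.sqrt_mul_sqrt_self _ hM.posSemidef.nonneg, ?_⟩,
    fun B B' hB hBM hB' hBM' => ?_⟩
  · simpa only [Matrix.star_eq_conjTranspose, norm_pow, Real.norm_eq_abs] using hsqrt
  · exact eq_of_posSemidef_of_mul_self_eq_mul_self hB.posSemidef hB'.posSemidef
      (hBM.trans hBM'.symm)

theorem of_mmul (A B : M3) : Matrix.of (mmul A B) = Matrix.of A * Matrix.of B := rfl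

theorem of_transp (A : M3) : Matrix.of (transp A) = (Matrix.of A)ᴴ := rfl

theorem of_idm : Matrix.of idm = 1 := by
  ext i j
  simp [idm, Matrix.one_apply]

theorem fnorm_eq_norm (A : M3) : fnorm A = ‖Matrix.of A‖ := by
  simp [fnorm, Matrix.frobenius_norm_def, Real.sqrt_eq_rpow]

theorem isHermitian_of_iff_symM (A : M3) : (Matrix.of A).IsHermitian ↔ SymM A :=
  ⟨fun h i j => h.apply j i, fun h => .ext fun i j => h j i⟩

theorem star_dotProduct_of_mulVec (A : M3) (v : V3) :
    star v ⬝ᵥ Matrix.of A *ᵥ v = ∑ i, ∑ j, v i * A i j * v j := by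
  simp [dotProduct, Matrix.mulVec, Finset.mul_sum, mul_assoc]

theorem posDef_of_iff_symM_and_posDefM (A : M3) :
    (Matrix.of A).PosDef ↔ SymM A ∧ PosDefM A := by
  simp only [Matrix.posDef_iff_dotProduct_mulVec, isHermitian_of_iff_symM,
    star_dotProduct_of_mulVec, PosDefM]

/-- For `S` skew and `K = T + Tᵀ - S²`, the square root of
`(Id + tS + t²T)ᵀ(Id + tS + t²T)` equals `Id + (t²/2) K + O(|t|³)`. -/
theorem stmt2 (S T : M3) (hS : ∀ i j, S i j = - S j i) :
    ∃ ε > (0 : ℝ), ∃ C > (0 : ℝ), ∀ t : ℝ, |t| < ε →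
      ∀ Mt : M3, Mt = mmul (transp (idm + t • S + t ^ 2 • T)) (idm + t • S + t ^ 2 • T) →
        SymM Mt ∧ PosDefM Mt ∧
        (∃ B : M3, SymM B ∧ PosDefM B ∧ mmul B B = Mt ∧
          fnorm (B - idm - (t ^ 2 / 2) • (T + transp T - mmul S S)) ≤ C * |t| ^ 3) ∧
        (∀ B B' : M3, SymM B → PosDefM B → mmul B B = Mt →
          SymM B' → PosDefM B' → mmul B' B' = Mt → B = B') := by
  simpa only [Matrix.of.surjective.forall, Matrix.of.surjective.exists, ← of_idm, Matrix.smul_of,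
    Matrix.of_add_of, Matrix.of_sub_of, ← of_transp, ← of_mmul, ← fnorm_eq_norm,
    posDef_of_iff_symM_and_posDefM, EmbeddingLike.apply_eq_iff_eq, and_assoc, and_imp]
    using stmt2_general (S := Matrix.of S) (Matrix.of T) (Matrix.ext fun i j => hS j i)
end
end

section
/- At every point of Ω the following 2×2 matrix identity holds: sym((∇y0)ᵀ ∇d0) + (∇b0)ᵀ ∇b0 = [[R_{1313}, R_{1323}], [R_{1323}, R_{2323}]], where R_{iklm} are the covariant Riemann curvatures of G. -/
noncomputable section

open scoped Topology ENNReal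
open Filter MeasureTheory

/-!
Put `u (x', x₃) = y₀ + x₃ b₀ + (x₃² / 2) d₀`, so that at `x₃ = 0` the columns of `Q₀` are the
partial derivatives of `u` and `d₀ = ∂₃∂₃u`. The condition (sym0) and the definition of `d₀` say
exactly that `∂₃ ((∇u)ᵀ∇u) = 0` at `x₃ = 0`, so there `(∇u)ᵀ∇u` agrees with `G` to first order in
every direction. Koszul's formula then gives `∂ₖ∂ₗu = ∑ₙ Γⁿₖₗ ∂ₙu`, which turns the quadratic part
of the curvature into inner products of second derivatives of `u`:
`R_{i3j3} = -½ ∂ᵢ∂ⱼ|b₀|² + ⟨∂ᵢb₀, ∂ⱼb₀⟩ - ⟨d₀, ∂ᵢ∂ⱼy₀⟩`.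
The last term is eliminated by differentiating `⟨∂ᵢy₀, d₀⟩ = -⟨∂ᵢb₀, b₀⟩`.
-/

section Calculus

variable {E F ι : Type*} [NormedAddCommGroup E] [NormedSpace ℝ E]
  [NormedAddCommGroup F] [NormedSpace ℝ F] [Fintype ι]

lemma fderiv_dotProduct_apply {f g : E → ι → ℝ} {x : E} (hf : DifferentiableAt ℝ f x)
    (hg : DifferentiableAt ℝ g x) (v : E) :
    fderiv ℝ (fun y => f y ⬝ᵥ g y) x v =
      fderiv ℝ f x v ⬝ᵥ g x + f x ⬝ᵥ fderiv ℝ g x v := by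
  have hf' := hasFDerivAt_pi'.1 hf.hasFDerivAt
  have hg' := hasFDerivAt_pi'.1 hg.hasFDerivAt
  have h : HasFDerivAt (fun y => f y ⬝ᵥ g y) _ x :=
    HasFDerivAt.fun_sum (u := Finset.univ) fun k _ => (hf' k).mul (hg' k)
  rw [h.fderiv]
  simp [dotProduct, ← Finset.sum_add_distrib, mul_comm, add_comm]

lemma differentiableAt_fderiv_apply {f : E → F} {x : E} (hf : ContDiffAt ℝ 2 f x) (v : E) :
    DifferentiableAt ℝ (fun y => fderiv ℝ f y v) x :=
  ((hf.fderiv_right (m := 1) (by norm_num)).differentiableAt (by norm_num)).clm_apply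
    (differentiableAt_const v)

lemma fderiv_fderiv_apply_comm {f : E → F} {x : E} (hf : ContDiffAt ℝ 2 f x) (v w : E) :
    fderiv ℝ (fun y => fderiv ℝ f y w) x v = fderiv ℝ (fun y => fderiv ℝ f y v) x w := by
  have hdiff : DifferentiableAt ℝ (fderiv ℝ f) x :=
    (hf.fderiv_right (m := 1) (by norm_num)).differentiableAt (by norm_num)
  have hsymm : IsSymmSndFDerivAt ℝ f x := hf.isSymmSndFDerivAt (by simp)
  simpa [fderiv_clm_apply hdiff (differentiableAt_const _)] using hsymm v w

end Calculus

section PartialDerivatives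

variable {x : E2}

lemma dot3_comm (u v : V3) : dot3 u v = dot3 v u :=
  dotProduct_comm u v

lemma pd3_castSucc (i : Fin 2) (f : E2 → ℝ) (x : E2) : pd3 i.castSucc f x = pd2 i f x :=
  dif_pos i.isLt

lemma pd3_two (f : E2 → ℝ) (x : E2) : pd3 2 f x = 0 :=
  dif_neg (lt_irrefl 2)

lemma pd2_zero (i : Fin 2) (x : E2) : pd2 i (fun _ => 0) x = 0 := by
  simp [pd2]

lemma eventuallyEq_pd2 {f g : E2 → ℝ} (h : f =ᶠ[𝓝 x] g) (i : Fin 2) :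
    pd2 i f =ᶠ[𝓝 x] pd2 i g :=
  h.fderiv.mono fun _ hy => congrArg (fun T : E2 →L[ℝ] ℝ => T (Pi.single i 1)) hy

lemma pd2_dot3 {f g : E2 → V3} (hf : DifferentiableAt ℝ f x) (hg : DifferentiableAt ℝ g x)
    (i : Fin 2) :
    pd2 i (fun y => dot3 (f y) (g y)) x = dot3 (pdv i f x) (g x) + dot3 (f x) (pdv i g x) :=
  fderiv_dotProduct_apply hf hg _

lemma differentiableAt_pdv {f : E2 → V3} (hf : ContDiffAt ℝ 2 f x) (i : Fin 2) :
    DifferentiableAt ℝ (pdv i f) x :=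
  differentiableAt_fderiv_apply hf _

lemma pdv_pdv_comm {f : E2 → V3} (hf : ContDiffAt ℝ 2 f x) (i j : Fin 2) :
    pdv i (pdv j f) x = pdv j (pdv i f) x :=
  fderiv_fderiv_apply_comm hf _ _

lemma pd2_pd2_dot3_self {f : E2 → V3} (hf : ContDiffAt ℝ 2 f x) (i j : Fin 2) :
    pd2 i (pd2 j fun y => dot3 (f y) (f y)) x =
      2 * (dot3 (pdv i (pdv j f) x) (f x) + dot3 (pdv j f x) (pdv i f x)) := by
  have hdf : DifferentiableAt ℝ f x := hf.differentiableAt (by norm_num)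
  have hfirst : pd2 j (fun y => dot3 (f y) (f y)) =ᶠ[𝓝 x]
      (2 : ℝ) • fun y => dot3 (pdv j f y) (f y) := by
    filter_upwards [hf.eventually (by simp)] with y hy
    have hdy : DifferentiableAt ℝ f y := hy.differentiableAt (by norm_num)
    rw [pd2_dot3 hdy hdy, dot3_comm (f y), ← two_mul, Pi.smul_apply, smul_eq_mul]
  rw [(eventuallyEq_pd2 hfirst i).eq_of_nhds, ← pd2_dot3 (differentiableAt_pdv hf j) hdf, pd2,
    fderiv_const_smul_field]
  rfl

lemma dot3_pdv_add_eq_neg {f g v w : E2 → V3} (hf : DifferentiableAt ℝ f x)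
    (hg : DifferentiableAt ℝ g x) (hv : DifferentiableAt ℝ v x) (hw : DifferentiableAt ℝ w x)
    (h : ∀ᶠ y in 𝓝 x, dot3 (f y) (g y) = -dot3 (v y) (w y)) (i : Fin 2) :
    dot3 (pdv i f x) (g x) + dot3 (f x) (pdv i g x) =
      -(dot3 (pdv i v x) (w x) + dot3 (v x) (pdv i w x)) := by
  rw [← pd2_dot3 hf hg, ← pd2_dot3 hv hw, (eventuallyEq_pd2 h i).eq_of_nhds]
  simp only [pd2, fderiv_fun_neg, neg_apply]

end PartialDerivatives

open scoped Matrix in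
lemma mulVec_gram_inv_mulVec_transpose {R ι : Type*} [CommRing R] [Fintype ι] [DecidableEq ι]
    {Q : Matrix ι ι R} (hQ : IsUnit Q.det) (v : ι → R) :
    Q *ᵥ ((Qᵀ * Q)⁻¹ *ᵥ (Qᵀ *ᵥ v)) = v := by
  have hQt : IsUnit Qᵀ.det := Q.isUnit_det_transpose hQ
  rw [Matrix.mulVec_mulVec, Matrix.mulVec_mulVec, Matrix.mul_inv_rev,
    Matrix.mul_nonsing_inv_cancel_left _ _ hQ, Matrix.nonsing_inv_mul _ hQt, Matrix.one_mulVec]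

/-- The 2-jet at `x` of an isometric immersion `u` of the `x₃`-independent metric `G`:
`q s` stands for `∂ₛu` and `D k s` for `∂ₖ∂ₛu`. Since `pd3 2 = 0`, `metric` in the direction
`k = 2` says that `∂₃` of the Gram matrix vanishes. -/
structure IsIsometricJet (G : E2 → M3) (q : Fin 3 → V3) (D : Fin 3 → Fin 3 → V3) (x : E2) :
    Prop where
  gram : ∀ s t, dot3 (q s) (q t) = G x s t
  det_ne_zero : (Matrix.of fun a s => q s a).det ≠ 0
  symm : ∀ k s, D k s = D s k
  metric : ∀ k s t, pd3 k (fun y => G y s t) x = dot3 (D k s) (q t) + dot3 (q s) (D k t)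

namespace IsIsometricJet

variable {G : E2 → M3} {q : Fin 3 → V3} {D : Fin 3 → Fin 3 → V3} {x : E2}

open scoped Matrix in
lemma sum_minv_smul (h : IsIsometricJet G q D x) (v : V3) :
    ∑ n, (∑ s, minv (G x) n s * dot3 (q s) v) • q n = v := by
  set Q : Matrix (Fin 3) (Fin 3) ℝ := Matrix.of fun a s => q s a
  have hG : Matrix.of (G x) = Qᵀ * Q := Matrix.ext fun s t => (h.gram s t).symm
  have hcoord : (fun n => ∑ s, minv (G x) n s * dot3 (q s) v) =
      (Qᵀ * Q)⁻¹ *ᵥ (Qᵀ *ᵥ v) := by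
    rw [← hG]
    rfl
  calc ∑ n, (∑ s, minv (G x) n s * dot3 (q s) v) • q n
      = Q *ᵥ fun n => ∑ s, minv (G x) n s * dot3 (q s) v := by
        rw [Matrix.mulVec_eq_sum]
        simp only [op_smul_eq_smul]
        rfl
    _ = v := by
        rw [hcoord, mulVec_gram_inv_mulVec_transpose (isUnit_iff_ne_zero.2 h.det_ne_zero)]

lemma gamma_eq_sum_minv (h : IsIsometricJet G q D x) (n k l : Fin 3) :
    Gamma G n k l x = ∑ s, minv (G x) n s * dot3 (q s) (D k l) := by
  rw [Gamma, Finset.mul_sum]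
  refine Finset.sum_congr rfl fun s _ => ?_
  rw [h.metric, h.metric, h.metric, h.symm l s, h.symm k s, h.symm l k, dot3_comm (D s l)]
  ring

lemma sum_gamma_smul (h : IsIsometricJet G q D x) (k l : Fin 3) :
    ∑ n, Gamma G n k l x • q n = D k l := by
  simpa only [h.gamma_eq_sum_minv] using h.sum_minv_smul (D k l)

lemma sum_gamma_mul_gamma (h : IsIsometricJet G q D x) (k l i m : Fin 3) :
    ∑ n, ∑ p, G x n p * (Gamma G n k l x * Gamma G p i m x) = dot3 (D k l) (D i m) := by
  rw [← h.sum_gamma_smul k l, ← h.sum_gamma_smul i m]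
  change _ = (∑ n, Gamma G n k l x • q n) ⬝ᵥ ∑ p, Gamma G p i m x • q p
  rw [sum_dotProduct]
  refine Finset.sum_congr rfl fun n _ => ?_
  rw [dotProduct_sum]
  refine Finset.sum_congr rfl fun p _ => ?_
  rw [smul_dotProduct, dotProduct_smul, ← h.gram, smul_eq_mul, smul_eq_mul, dot3, dotProduct]
  ring

lemma riem_eq_pd3_add_dot3 (h : IsIsometricJet G q D x) (i k l m : Fin 3) :
    Riem G i k l m x =
      (1 / 2) * (pd3 k (pd3 l fun y => G y i m) x + pd3 i (pd3 m fun y => G y k l) x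
        - pd3 k (pd3 m fun y => G y i l) x - pd3 i (pd3 l fun y => G y k m) x)
      + (dot3 (D k l) (D i m) - dot3 (D k m) (D i l)) := by
  simp only [Riem, mul_sub, Finset.sum_sub_distrib, h.sum_gamma_mul_gamma]

lemma riem_castSucc_two_castSucc_two (h : IsIsometricJet G q D x) (i j : Fin 2) :
    Riem G i.castSucc 2 j.castSucc 2 x =
      -(1 / 2) * pd2 i (pd2 j fun y => G y 2 2) x
        + dot3 (D 2 j.castSucc) (D i.castSucc 2) - dot3 (D 2 2) (D i.castSucc j.castSucc) := by
  have hpd3 : ∀ f : E2 → ℝ, pd3 2 f = fun _ => 0 := fun f => funext (pd3_two f)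
  have hpd2 : ∀ (a : Fin 2) (f : E2 → ℝ), pd3 a.castSucc f = pd2 a f := fun a f =>
    funext (pd3_castSucc a f)
  rw [h.riem_eq_pd3_add_dot3]
  simp only [hpd3, hpd2, pd2_zero]
  ring

end IsIsometricJet

/-- The second derivatives `∂ₖ∂ₛu` at `x₃ = 0` of `u = y₀ + x₃ b₀ + (x₃² / 2) d₀`, as the
derivatives `∂ₖ` of the columns of `Q₀`. The row `k = 2` is `∂₃∇u = [∂₁b₀ | ∂₂b₀ | d₀]`, whose
columns are written `Qcol b0 d0`. -/
def secondJet (y0 b0 d0 : E2 → V3) (x : E2) (k s : Fin 3) : V3 :=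
  ![pdv 0 (fun y => Qcol y0 b0 y s) x, pdv 1 (fun y => Qcol y0 b0 y s) x, Qcol b0 d0 x s] k

section Plate

variable {G : E2 → M3} {y0 b0 d0 : E2 → V3} {x : E2}

lemma Qcol_castSucc (y0 b0 : E2 → V3) (x : E2) (i : Fin 2) :
    Qcol y0 b0 x i.castSucc = pdv i y0 x := by
  fin_cases i <;> rfl

lemma Qcol_two (y0 b0 : E2 → V3) (x : E2) : Qcol y0 b0 x 2 = b0 x := rfl

lemma secondJet_castSucc (y0 b0 d0 : E2 → V3) (x : E2) (i : Fin 2) (s : Fin 3) :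
    secondJet y0 b0 d0 x i.castSucc s = pdv i (fun y => Qcol y0 b0 y s) x := by
  fin_cases i <;> rfl

lemma secondJet_two (y0 b0 d0 : E2 → V3) (x : E2) (s : Fin 3) :
    secondJet y0 b0 d0 x 2 s = Qcol b0 d0 x s := rfl

lemma forall_fin_three_iff_castSucc {P : Fin 3 → Prop} :
    (∀ s, P s) ↔ (∀ i : Fin 2, P i.castSucc) ∧ P 2 :=
  Fin.forall_fin_succ'

lemma differentiableAt_Qcol (hy : ContDiffAt ℝ 2 y0 x) (hb : DifferentiableAt ℝ b0 x) :
    ∀ s, DifferentiableAt ℝ (fun y => Qcol y0 b0 y s) x := by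
  simp only [forall_fin_three_iff_castSucc, Qcol_castSucc, Qcol_two]
  exact ⟨differentiableAt_pdv hy, hb⟩

lemma secondJet_comm (hy : ContDiffAt ℝ 2 y0 x) :
    ∀ k s, secondJet y0 b0 d0 x k s = secondJet y0 b0 d0 x s k := by
  simp only [forall_fin_three_iff_castSucc, secondJet_castSucc, secondJet_two, Qcol_castSucc,
    Qcol_two, implies_true, and_true]
  exact pdv_pdv_comm hy

lemma isIsometricJet_secondJet (hy : ContDiffAt ℝ 2 y0 x) (hb : DifferentiableAt ℝ b0 x)
    (hQ : ∀ᶠ z in 𝓝 x, ∀ s t, dot3 (Qcol y0 b0 z s) (Qcol y0 b0 z t) = G z s t)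
    (hdet : Qdet y0 b0 x ≠ 0)
    (hsym : ∀ i j, dot3 (pdv i y0 x) (pdv j b0 x) + dot3 (pdv j y0 x) (pdv i b0 x) = 0)
    (hd : ∀ i, dot3 (pdv i y0 x) (d0 x) = -dot3 (pdv i b0 x) (b0 x))
    (hd2 : dot3 (b0 x) (d0 x) = 0) :
    IsIsometricJet G (Qcol y0 b0 x) (secondJet y0 b0 d0 x) x where
  gram := hQ.self_of_nhds
  det_ne_zero := hdet
  symm := secondJet_comm hy
  metric := by
    refine forall_fin_three_iff_castSucc.2 ⟨fun k s t => ?_, ?_⟩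
    · have hG : (fun y => G y s t) =ᶠ[𝓝 x] fun y => dot3 (Qcol y0 b0 y s) (Qcol y0 b0 y t) :=
        hQ.mono fun z hz => (hz s t).symm
      rw [pd3_castSucc, (eventuallyEq_pd2 hG k).eq_of_nhds, secondJet_castSucc,
        secondJet_castSucc]
      exact pd2_dot3 (differentiableAt_Qcol hy hb s) (differentiableAt_Qcol hy hb t) k
    · simp only [forall_fin_three_iff_castSucc, pd3_two, secondJet_two, Qcol_castSucc, Qcol_two]
      refine ⟨fun a => ⟨fun c => ?_, ?_⟩, fun a => ?_, ?_⟩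
      · rw [dot3_comm, add_comm, hsym a c]
      · rw [hd a, add_neg_cancel]
      · rw [dot3_comm, hd a, dot3_comm (b0 x), neg_add_cancel]
      · rw [dot3_comm (d0 x), hd2, add_zero]

end Plate

theorem stmt5_general {G : E2 → M3} {y0 b0 d0 : E2 → V3} {x : E2}
    (hy : ContDiffAt ℝ 2 y0 x) (hb : ContDiffAt ℝ 2 b0 x) (hd : DifferentiableAt ℝ d0 x)
    (hQ : ∀ᶠ z in 𝓝 x, ∀ s t, dot3 (Qcol y0 b0 z s) (Qcol y0 b0 z t) = G z s t)
    (hdet : Qdet y0 b0 x ≠ 0)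
    (hsym : ∀ i j, dot3 (pdv i y0 x) (pdv j b0 x) + dot3 (pdv j y0 x) (pdv i b0 x) = 0)
    (hd0 : ∀ᶠ z in 𝓝 x,
      (∀ i : Fin 2, dot3 (Qcol y0 b0 z i.castSucc) (d0 z) = -dot3 (pdv i b0 z) (b0 z)) ∧
      dot3 (Qcol y0 b0 z 2) (d0 z) = 0)
    (i j : Fin 2) :
    (dot3 (pdv i y0 x) (pdv j d0 x) + dot3 (pdv j y0 x) (pdv i d0 x)) / 2 +
        dot3 (pdv i b0 x) (pdv j b0 x) =
      Riem G i.castSucc 2 j.castSucc 2 x := by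
  simp only [Qcol_castSucc, Qcol_two] at hd0
  have hdb : DifferentiableAt ℝ b0 x := hb.differentiableAt (by norm_num)
  have hjet : IsIsometricJet G (Qcol y0 b0 x) (secondJet y0 b0 d0 x) x :=
    isIsometricJet_secondJet hy hdb hQ hdet hsym hd0.self_of_nhds.1 hd0.self_of_nhds.2
  have hG22 : pd2 i (pd2 j fun z => G z 2 2) x =
      2 * (dot3 (pdv i (pdv j b0) x) (b0 x) + dot3 (pdv j b0 x) (pdv i b0 x)) := by
    rw [← pd2_pd2_dot3_self hb]
    have h22 := hQ.mono fun z hz => (hz 2 2).symm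
    exact (eventuallyEq_pd2 (eventuallyEq_pd2 h22 j) i).eq_of_nhds
  have hR : Riem G i.castSucc 2 j.castSucc 2 x =
      -dot3 (pdv i (pdv j b0) x) (b0 x) - dot3 (d0 x) (pdv i (pdv j y0) x) := by
    rw [hjet.riem_castSucc_two_castSucc_two, hG22]
    simp only [secondJet_castSucc, secondJet_two, Qcol_castSucc, Qcol_two]
    ring
  have hrel (a c : Fin 2) := dot3_pdv_add_eq_neg (differentiableAt_pdv hy a) hd
    (differentiableAt_pdv hb a) hdb (hd0.mono fun z hz => hz.1 a) c
  have hij := hrel i j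
  have hji := hrel j i
  rw [pdv_pdv_comm hy j i, pdv_pdv_comm hb j i] at hij
  rw [dot3_comm (pdv j b0 x)] at hji
  rw [hR, dot3_comm (d0 x)]
  linear_combination (1 / 2) * hij + (1 / 2) * hji

/-- `sym((∇y₀)ᵀ∇d₀) + (∇b₀)ᵀ∇b₀ = [[R₁₃₁₃, R₁₃₂₃], [R₁₃₂₃, R₂₃₂₃]]` on `Ω`. -/
theorem stmt5
    (Ω : Set E2) (hΩo : IsOpen Ω) (hΩb : Bornology.IsBounded Ω)
    (hΩsc : SimplyConnectedSpace ↥Ω)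
    (G : E2 → M3) (hGsm : ContDiffOn ℝ (⊤ : ℕ∞) G (closure Ω))
    (hGsym : ∀ x ∈ closure Ω, SymM (G x)) (hGpos : ∀ x ∈ closure Ω, PosDefM (G x))
    (y0 : E2 → V3) (hy0sm : ContDiffOn ℝ (⊤ : ℕ∞) y0 (closure Ω))
    (himm : ∀ x ∈ Ω, ∀ i j : Fin 2,
      dot3 (pdv i y0 x) (pdv j y0 x) = G x i.castSucc j.castSucc)
    (b0 : E2 → V3) (hb0sm : ContDiffOn ℝ (⊤ : ℕ∞) b0 (closure Ω))
    (hQ0 : ∀ x ∈ Ω, ∀ i j : Fin 3,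
      dot3 (Qcol y0 b0 x i) (Qcol y0 b0 x j) = G x i j)
    (hQdet : ∀ x ∈ Ω, 0 < Qdet y0 b0 x)
    (hsym0 : ∀ x ∈ Ω, ∀ i j : Fin 2,
      dot3 (pdv i y0 x) (pdv j b0 x) + dot3 (pdv j y0 x) (pdv i b0 x) = 0)
    (d0 : E2 → V3) (hd0sm : ContDiffOn ℝ (⊤ : ℕ∞) d0 (closure Ω))
    (hd0 : ∀ x ∈ Ω,
      (∀ i : Fin 2, dot3 (Qcol y0 b0 x i.castSucc) (d0 x) = - dot3 (pdv i b0 x) (b0 x)) ∧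
      dot3 (Qcol y0 b0 x 2) (d0 x) = 0)
 :
    ∀ x ∈ Ω, ∀ i j : Fin 2,
      (dot3 (pdv i y0 x) (pdv j d0 x) + dot3 (pdv j y0 x) (pdv i d0 x)) / 2 +
        dot3 (pdv i b0 x) (pdv j b0 x) =
      Riem G i.castSucc 2 j.castSucc 2 x := by
  intro x hx
  have hΩ : Ω ∈ 𝓝 x := hΩo.mem_nhds hx
  have smooth {f : E2 → V3} (hf : ContDiffOn ℝ (⊤ : ℕ∞) f (closure Ω)) : ContDiffAt ℝ 2 f x :=
    (hf.contDiffAt (mem_of_superset hΩ subset_closure)).of_le (WithTop.coe_le_coe.2 le_top)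
  exact stmt5_general (smooth hy0sm) (smooth hb0sm) ((smooth hd0sm).differentiableAt (by norm_num))
    (eventually_of_mem hΩ hQ0) (hQdet x hx).ne' (hsym0 x hx) (eventually_of_mem hΩ hd0)
end
end
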